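/- arXiv:2504.05123 — 3 statements merged into one kernel-verified Lean document; each statement's English description precedes it below -/
import Mathlib

section
/- Let n ≥ 2 and let π be a partition of the ground set of the crown poset C_{2n} into at least two blocks, each of which induces a connected subposet. Then π is compatible (i.e., the transitive closure of the relation B ≤_π B′, defined by the existence of x ∈ B and y ∈ B′ with x ≤ y in C_{2n}, is antisymmetric) if and only if at least one block of π has odd cardinality. -/
/-- Cover relations of the crown poset `C_{2n}` on `{1,…,2n}`:
`2i−1 ≺ 2i` for `1 ≤ i ≤ n`, `2i+1 ≺ 2i` for `1 ≤ i ≤ n−1`, and `1 ≺ 2n`. -/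
def crownCover (n x y : ℕ) : Prop :=
  Odd x ∧ Even y ∧ (y = x + 1 ∨ x = y + 1 ∨ (x = 1 ∧ y = 2 * n))

/-- The order relation of the crown poset `C_{2n}` (restricted to `{1,…,2n}`). -/
def crownLe (n x y : ℕ) : Prop := x = y ∨ crownCover n x y

/-- The ground set `{1,…,2n}` of the crown poset. -/
def crownGround (n : ℕ) : Finset ℕ := Finset.Icc 1 (2 * n)

/-- `π` is a partition of the finite set `s`: blocks are nonempty subsets of `s`
and each element of `s` lies in exactly one block. -/
def IsPartitionOn (s : Finset ℕ) (π : Finset (Finset ℕ)) : Prop :=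
  (∀ B ∈ π, B.Nonempty) ∧ (∀ B ∈ π, B ⊆ s) ∧ ∀ x ∈ s, ∃! B, B ∈ π ∧ x ∈ B

/-- A block is connected if it induces a connected subgraph of `G`. -/
def BlockConnected (G : SimpleGraph ℕ) (B : Finset ℕ) : Prop :=
  (G.induce (B : Set ℕ)).Connected

/-- A connected partition of `s` with respect to the graph `G`. -/
def IsConnectedPartition (s : Finset ℕ) (G : SimpleGraph ℕ) (π : Finset (Finset ℕ)) : Prop :=
  IsPartitionOn s π ∧ ∀ B ∈ π, BlockConnected G B

/-- The comparability graph of the relation `le`. -/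
def compGraph (le : ℕ → ℕ → Prop) : SimpleGraph ℕ := SimpleGraph.fromRel le

/-- The relation `B ≤_π B'` on blocks of `π`: both are blocks and there are
`x ∈ B`, `y ∈ B'` with `x ≤ y`. -/
def blockRel (le : ℕ → ℕ → Prop) (π : Finset (Finset ℕ)) (B B' : Finset ℕ) : Prop :=
  B ∈ π ∧ B' ∈ π ∧ ∃ x ∈ B, ∃ y ∈ B', le x y

/-- `π` is compatible: the transitive closure of `≤_π` is antisymmetric. -/
def IsCompatible (le : ℕ → ℕ → Prop) (π : Finset (Finset ℕ)) : Prop :=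
  ∀ B ∈ π, ∀ B' ∈ π, Relation.TransGen (blockRel le π) B B' →
    Relation.TransGen (blockRel le π) B' B → B = B'

def crS (n x : ℕ) : ℕ := if x = 2 * n then 1 else x + 1
def crP (n x : ℕ) : ℕ := if x = 1 then 2 * n else x - 1

lemma crS_mem {n x : ℕ} (hn : 2 ≤ n) (hx : x ∈ crownGround n) : crS n x ∈ crownGround n := by
  simp only [crownGround, Finset.mem_Icc, crS] at *; split_ifs <;> omega
lemma crP_mem {n x : ℕ} (hn : 2 ≤ n) (hx : x ∈ crownGround n) : crP n x ∈ crownGround n := by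
  simp only [crownGround, Finset.mem_Icc, crP] at *; split_ifs <;> omega
lemma crSP {n x : ℕ} (hx : x ∈ crownGround n) : crS n (crP n x) = x := by
  simp only [crownGround, Finset.mem_Icc, crP, crS] at *; split_ifs <;> omega
lemma crPS {n x : ℕ} (hx : x ∈ crownGround n) : crP n (crS n x) = x := by
  simp only [crownGround, Finset.mem_Icc, crP, crS] at *; split_ifs <;> omega
lemma crS_odd {n x : ℕ} : Odd (crS n x) ↔ Even x := by
  simp only [crS, Nat.odd_iff, Nat.even_iff] at *; split_ifs <;> omega
lemma crS_even {n x : ℕ} : Even (crS n x) ↔ Odd x := by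
  rw [← Nat.not_odd_iff_even, crS_odd, Nat.not_even_iff_odd]
lemma crP_odd {n x : ℕ} (hx : x ∈ crownGround n) : Odd (crP n x) ↔ Even x := by
  simp only [crownGround, Finset.mem_Icc, crP, Nat.odd_iff, Nat.even_iff] at *; split_ifs <;> omega
lemma crP_even {n x : ℕ} (hx : x ∈ crownGround n) : Even (crP n x) ↔ Odd x := by
  simp only [crownGround, Finset.mem_Icc, crP, Nat.odd_iff, Nat.even_iff] at *; split_ifs <;> omega

lemma cover_iff {n x y : ℕ} (hn : 2 ≤ n) (hx : x ∈ crownGround n) (hy : y ∈ crownGround n) :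
    crownCover n x y ↔ Odd x ∧ (y = crS n x ∨ x = crS n y) := by
  simp only [crownGround, Finset.mem_Icc, crS, crownCover, Nat.odd_iff, Nat.even_iff] at *
  constructor
  · rintro ⟨h1, h2, h3⟩
    refine ⟨h1, ?_⟩
    split_ifs <;> omega
  · rintro ⟨h1, h3⟩
    refine ⟨h1, ?_⟩
    split_ifs at h3 <;> omega

lemma card_split (B : Finset ℕ) :
    B.card = (B.filter (fun x => Odd x)).card + (B.filter (fun x => Even x)).card := by
  rw [← Finset.card_filter_add_card_filter_not (s := B) (fun x => Odd x)]
  simp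

lemma even_card_of {n : ℕ} (B : Finset ℕ) (hB : B ⊆ crownGround n)
    (h1 : ∀ x ∈ B, Odd x → crS n x ∈ B) (h2 : ∀ x ∈ B, Even x → crP n x ∈ B) : Even B.card := by
  rw [card_split]
  have : (B.filter (fun x => Odd x)).card = (B.filter (fun x => Even x)).card := by
    apply Finset.card_bij' (fun x _ => crS n x) (fun x _ => crP n x)
    · intro x hx; simp only [Finset.mem_filter] at *
      exact ⟨h1 x hx.1 hx.2, crS_even.2 hx.2⟩
    · intro x hx; simp only [Finset.mem_filter] at *
      exact ⟨h2 x hx.1 hx.2, (crP_odd (hB hx.1)).2 hx.2⟩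
    · intro x hx; simp only [Finset.mem_filter] at *
      exact crPS (hB hx.1)
    · intro x hx; simp only [Finset.mem_filter] at *
      exact crSP (hB hx.1)
  rw [this]; exact ⟨_, rfl⟩

lemma even_card_of' {n : ℕ} (B : Finset ℕ) (hB : B ⊆ crownGround n)
    (h1 : ∀ x ∈ B, Even x → crS n x ∈ B) (h2 : ∀ x ∈ B, Odd x → crP n x ∈ B) : Even B.card := by
  rw [card_split]
  have : (B.filter (fun x => Even x)).card = (B.filter (fun x => Odd x)).card := by
    apply Finset.card_bij' (fun x _ => crS n x) (fun x _ => crP n x)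
    · intro x hx; simp only [Finset.mem_filter] at *
      exact ⟨h1 x hx.1 hx.2, crS_odd.2 hx.2⟩
    · intro x hx; simp only [Finset.mem_filter] at *
      exact ⟨h2 x hx.1 hx.2, (crP_even (hB hx.1)).2 hx.2⟩
    · intro x hx; simp only [Finset.mem_filter] at *
      exact crPS (hB hx.1)
    · intro x hx; simp only [Finset.mem_filter] at *
      exact crSP (hB hx.1)
  rw [this]; exact ⟨_, rfl⟩

lemma exists_blk {n : ℕ} {π : Finset (Finset ℕ)} (h : IsPartitionOn (crownGround n) π) :
    ∃ b : ℕ → Finset ℕ, (∀ x ∈ crownGround n, b x ∈ π ∧ x ∈ b x) ∧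
      ∀ B ∈ π, ∀ x ∈ B, b x = B := by
  classical
  obtain ⟨h0, h1, h2⟩ := h
  refine ⟨fun x => if hx : x ∈ crownGround n then (h2 x hx).choose else ∅, ?_, ?_⟩
  · intro x hx
    simp only [hx, dif_pos]
    exact (h2 x hx).choose_spec.1
  · intro B hB x hx
    have hg := h1 B hB hx
    simp only [hg, dif_pos]
    exact ((h2 x hg).choose_spec.2 B ⟨hB, hx⟩).symm

lemma const_of_conn {n : ℕ} {B : Finset ℕ} (hB : BlockConnected (compGraph (crownLe n)) B)
    (f : ℕ → ℤ) (hf : ∀ x ∈ B, ∀ y ∈ B, crownCover n x y → f x = f y) :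
    ∀ x ∈ B, ∀ y ∈ B, f x = f y := by
  intro x hx y hy
  obtain ⟨w⟩ := hB.preconnected ⟨x, hx⟩ ⟨y, hy⟩
  have key : ∀ (u v : (B : Set ℕ)),
      ((compGraph (crownLe n)).induce (B : Set ℕ)).Walk u v → f u = f v := by
    intro u v w
    induction w with
    | nil => rfl
    | cons h _ ih =>
      rw [← ih]
      rename_i a b c _
      simp only [SimpleGraph.comap_adj, compGraph, SimpleGraph.fromRel_adj, crownLe] at h
      obtain ⟨hne, h | h⟩ := h
      · rcases h with h | h
        · exact absurd h hne
        · exact hf _ a.2 _ b.2 h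
      · rcases h with h | h
        · exact absurd h.symm hne
        · exact (hf _ b.2 _ a.2 h).symm
  exact key _ _ w

lemma odd_imp {n : ℕ} (hn : 2 ≤ n) {π : Finset (Finset ℕ)}
    (hconn : IsConnectedPartition (crownGround n) (compGraph (crownLe n)) π)
    (hodd : ∃ B ∈ π, Odd B.card) : IsCompatible (crownLe n) π := by
  classical
  obtain ⟨hp, hc⟩ := hconn
  obtain ⟨b, hb, hbu⟩ := exists_blk hp
  obtain ⟨hne, hsub, -⟩ := hp
  obtain ⟨B, hB, hBo⟩ := hodd
  set Us := (crownGround n).filter (fun i => b i ≠ b (crS n i) ∧ Odd i) with hUs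
  set Ds := (crownGround n).filter (fun i => b i ≠ b (crS n i) ∧ ¬ Odd i) with hDs
  have memS : ∀ x ∈ B, b x = b (crS n x) → crS n x ∈ B := by
    intro x hx h
    have := (hb _ (crS_mem hn (hsub B hB hx))).2
    rwa [← h, hbu B hB x hx] at this
  have memP : ∀ x ∈ B, b (crP n x) = b (crS n (crP n x)) → crP n x ∈ B := by
    intro x hx h
    have := (hb _ (crP_mem hn (hsub B hB hx))).2
    rwa [h, crSP (hsub B hB hx), hbu B hB x hx] at this
  have hU : 0 < Us.card := by
    by_contra h
    have h0 : Us = ∅ := by simpa using h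
    have hh : ∀ i ∈ crownGround n, Odd i → b i = b (crS n i) := by
      intro i hi ho
      by_contra hcon
      have : i ∈ Us := by simp [hUs, hi, ho, hcon]
      simp [h0] at this
    refine (Nat.not_even_iff_odd.2 hBo) (even_card_of B (hsub B hB) ?_ ?_)
    · intro x hx ho
      exact memS x hx (hh x (hsub B hB hx) ho)
    · intro x hx ho
      exact memP x hx (hh _ (crP_mem hn (hsub B hB hx)) ((crP_odd (hsub B hB hx)).2 ho))
  have hD : 0 < Ds.card := by
    by_contra h
    have h0 : Ds = ∅ := by simpa using h
    have hh : ∀ i ∈ crownGround n, ¬ Odd i → b i = b (crS n i) := by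
      intro i hi ho
      by_contra hcon
      have : i ∈ Ds := Finset.mem_filter.2 ⟨hi, hcon, ho⟩
      simp [h0] at this
    refine (Nat.not_even_iff_odd.2 hBo) (even_card_of' B (hsub B hB) ?_ ?_)
    · intro x hx ho
      exact memS x hx (hh x (hsub B hB hx) (by simpa using ho))
    · intro x hx ho
      exact memP x hx (hh _ (crP_mem hn (hsub B hB hx))
        (by rw [crP_odd (hsub B hB hx)]; simpa using ho))
  set w : ℕ → ℤ := fun i => (if b i ≠ b (crS n i) ∧ Odd i then (Ds.card : ℤ) else 0)
    + (if b i ≠ b (crS n i) ∧ ¬ Odd i then (-(Us.card : ℤ)) else 0) with hw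
  set f : ℕ → ℤ := fun x => ∑ i ∈ Finset.Ico 1 x, w i with hf
  have htot : f (2 * n + 1) = 0 := by
    have : Finset.Ico 1 (2 * n + 1) = crownGround n := by
      ext i; simp only [crownGround, Finset.mem_Icc, Finset.mem_Ico]; omega
    simp only [hf, this, hw, Finset.sum_add_distrib, ← Finset.sum_filter, Finset.sum_const]
    rw [← hUs, ← hDs]
    simp only [nsmul_eq_mul]
    ring
  have hstep : ∀ x ∈ crownGround n, f (crS n x) = f x + w x := by
    intro x hx
    simp only [crownGround, Finset.mem_Icc] at hx
    have h1 : f (x + 1) = f x + w x := Finset.sum_Ico_succ_top hx.1 _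
    unfold crS
    split_ifs with h
    · rw [← h1, h, htot]; simp [hf]
    · exact h1
  have hA : ∀ x ∈ crownGround n, ∀ y ∈ crownGround n, crownCover n x y →
      (b x = b y ∧ f x = f y) ∨ (b x ≠ b y ∧ f x < f y) := by
    intro x hx y hy h
    rw [cover_iff hn hx hy] at h
    obtain ⟨ho, rfl | rfl⟩ := h
    · rw [hstep x hx]
      by_cases hbb : b x = b (crS n x)
      · left; simp [hw, ← hbb]
      · right; refine ⟨hbb, ?_⟩
        simp only [hw]; simp [hbb, ho]; simpa using hD
    · rw [hstep y hy]
      have ho' : ¬ Odd y := by rw [crS_odd] at ho; simpa using ho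
      by_cases hbb : b y = b (crS n y)
      · left; simp [hw, ← hbb]
      · right; refine ⟨fun h => hbb h.symm, ?_⟩
        have hwy : w y = -(Us.card : ℤ) := by
          simp only [hw]; rw [if_neg (fun h => ho' h.2), if_pos ⟨hbb, ho'⟩, zero_add]
        omega
  have hconst : ∀ C ∈ π, ∀ x ∈ C, ∀ y ∈ C, f x = f y := by
    intro C hC
    refine const_of_conn (hc C hC) f ?_
    intro x hx y hy h
    rcases hA x (hsub C hC hx) y (hsub C hC hy) h with h | h
    · exact h.2
    · exact absurd ((hbu C hC x hx).trans (hbu C hC y hy).symm) h.1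
  have hrel : ∀ C C', blockRel (crownLe n) π C C' →
      C' ∈ π ∧ (C = C' ∨ ∀ x ∈ C, ∀ y ∈ C', f x < f y) := by
    rintro C C' ⟨hC, hC', x, hx, y, hy, h | h⟩
    · subst h
      exact ⟨hC', Or.inl ((hbu C hC x hx).symm.trans (hbu C' hC' x hy))⟩
    · refine ⟨hC', ?_⟩
      rcases hA x (hsub C hC hx) y (hsub C' hC' hy) h with h | h
      · left; rw [← hbu C hC x hx, ← hbu C' hC' y hy, h.1]
      · right; intro u hu v hv
        rw [hconst C hC u hu x hx, hconst C' hC' v hv y hy]; exact h.2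
  have htr : ∀ C C', Relation.TransGen (blockRel (crownLe n) π) C C' →
      C' ∈ π ∧ (C = C' ∨ ∀ x ∈ C, ∀ y ∈ C', f x < f y) := by
    intro C C' h
    induction h with
    | single h => exact hrel _ _ h
    | tail _ h ih =>
      obtain ⟨hm, ih⟩ := ih
      obtain ⟨hm', h⟩ := hrel _ _ h
      refine ⟨hm', ?_⟩
      rcases ih with rfl | ih
      · exact h
      · rcases h with rfl | h
        · exact Or.inr ih
        · right; intro x hx y hy
          obtain ⟨z, hz⟩ := hne _ hm
          exact (ih x hx z hz).trans (h z hz y hy)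
  intro C hC C' hC' h1 h2
  rcases (htr _ _ h1).2 with h | h
  · exact h
  · rcases (htr _ _ h2).2 with h' | h'
    · exact h'.symm
    · obtain ⟨x, hx⟩ := hne C hC
      obtain ⟨y, hy⟩ := hne C' hC'
      exact absurd (h x hx y hy) (h' y hy x hx).not_gt

lemma exists_min_block {n : ℕ} {π : Finset (Finset ℕ)} (hπ : π.Nonempty)
    (h : IsCompatible (crownLe n) π) :
    ∃ B ∈ π, ∀ B' ∈ π, blockRel (crownLe n) π B' B → B' = B := by
  let R : π → π → Prop := fun A C =>
    Relation.TransGen (blockRel (crownLe n) π) A.1 C.1 ∧ A ≠ C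
  haveI : IsTrans π R := ⟨by
    rintro a b c ⟨h1, h2⟩ ⟨h3, h4⟩
    refine ⟨h1.trans h3, ?_⟩
    rintro rfl
    exact h2 (Subtype.ext (h _ a.2 _ b.2 h1 h3))⟩
  haveI : Std.Irrefl R := ⟨fun a ha => ha.2 rfl⟩
  have wf : WellFounded R := Finite.wellFounded_of_trans_of_irrefl R
  obtain ⟨B0, hB0⟩ := hπ
  obtain ⟨m, -, hm⟩ := wf.has_min Set.univ ⟨⟨B0, hB0⟩, trivial⟩
  refine ⟨m.1, m.2, fun B' hB' hr => ?_⟩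
  by_contra hne
  exact hm ⟨B', hB'⟩ trivial ⟨.single hr, fun he => hne (congrArg Subtype.val he)⟩

lemma closed_eq_ground {n : ℕ} (B : Finset ℕ) (hB : B ⊆ crownGround n)
    (hne : B.Nonempty) (hs : ∀ x ∈ B, crS n x ∈ B) : crownGround n ⊆ B := by
  obtain ⟨x, hx⟩ := hne
  have up : ∀ x ∈ B, ∀ k, x + k ≤ 2 * n → x + k ∈ B := by
    intro x hx k
    induction k with
    | zero => intro _; exact hx
    | succ k ih =>
      intro hk
      have := hs _ (ih (by omega))
      rw [crS, if_neg (by omega)] at this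
      exact this
  have hg := hB hx
  simp only [crownGround, Finset.mem_Icc] at hg
  have h2n : 2 * n ∈ B := by
    have := up x hx (2 * n - x) (by omega)
    rwa [Nat.add_sub_cancel' hg.2] at this
  have h1 : 1 ∈ B := by
    have := hs _ h2n
    simpa [crS] using this
  intro y hy
  simp only [crownGround, Finset.mem_Icc] at hy
  have := up 1 h1 (y - 1) (by omega)
  rwa [Nat.add_sub_cancel' hy.1] at this

lemma odd_le {n : ℕ} (hn : 2 ≤ n) (B : Finset ℕ) (hB : B ⊆ crownGround n)
    (hc : BlockConnected (compGraph (crownLe n)) B) :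
    (B.filter (fun x => Odd x)).card ≤ (B.filter (fun x => Even x)).card + 1 := by
  classical
  have h1 := SimpleGraph.Connected.card_vert_le_card_edgeSet_add_one hc
  have h2 : Nat.card ((compGraph (crownLe n)).induce (B : Set ℕ)).edgeSet
      ≤ 2 * (B.filter (fun x => Even x)).card := by
    set E := B.filter (fun x => Even x)
    set T : Finset (Sym2 ℕ) := E.image (fun x => s(x, crS n x)) ∪ E.image (fun x => s(x, crP n x))
      with hT
    have hTc : T.card ≤ 2 * E.card := by
      refine (Finset.card_union_le _ _).trans ?_
      have := Finset.card_image_le (s := E) (f := fun x => s(x, crS n x))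
      have := Finset.card_image_le (s := E) (f := fun x => s(x, crP n x))
      omega
    refine le_trans ?_ hTc
    have key : ∀ a ∈ B, ∀ b ∈ B, crownCover n a b → s(a, b) ∈ T := by
      intro a ha b hb h
      have hbE : b ∈ E := Finset.mem_filter.2 ⟨hb, h.2.1⟩
      rw [cover_iff hn (hB ha) (hB hb)] at h
      obtain ⟨ho, h | h⟩ := h
      · refine Finset.mem_union_right _ (Finset.mem_image.2 ⟨b, hbE, ?_⟩)
        rw [Sym2.eq_swap, h, crPS (hB ha)]
      · refine Finset.mem_union_left _ (Finset.mem_image.2 ⟨b, hbE, ?_⟩)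
        rw [Sym2.eq_swap, h]
    have hmem : ∀ e ∈ ((compGraph (crownLe n)).induce (B : Set ℕ)).edgeSet,
        Sym2.map Subtype.val e ∈ T := by
      intro e
      induction e using Sym2.ind with
      | _ a b =>
        intro h
        simp only [SimpleGraph.mem_edgeSet, SimpleGraph.comap_adj, compGraph,
          SimpleGraph.fromRel_adj, crownLe] at h
        rw [Sym2.map_mk]
        obtain ⟨hne, h | h⟩ := h
        · rcases h with h | h
          · exact absurd h hne
          · exact key _ a.2 _ b.2 h
        · rcases h with h | h
          · exact absurd h.symm hne
          · have := key _ b.2 _ a.2 h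
            rwa [Sym2.eq_swap] at this
    have := Nat.card_le_card_of_injective
      (fun e : ((compGraph (crownLe n)).induce (B : Set ℕ)).edgeSet =>
        (⟨Sym2.map Subtype.val e.1, hmem e.1 e.2⟩ : T)) (by
        intro e e' h
        exact Subtype.ext (Sym2.map.injective Subtype.val_injective (congrArg Subtype.val h)))
    simpa using this
  have h3 : Nat.card (B : Set ℕ) = B.card := by simp
  have h4 := card_split B
  omega

lemma imp_odd {n : ℕ} (hn : 2 ≤ n) {π : Finset (Finset ℕ)}
    (hconn : IsConnectedPartition (crownGround n) (compGraph (crownLe n)) π)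
    (hcard : 2 ≤ π.card) (h : IsCompatible (crownLe n) π) : ∃ B ∈ π, Odd B.card := by
  classical
  obtain ⟨hp, hc⟩ := hconn
  obtain ⟨b, hb, hbu⟩ := exists_blk hp
  obtain ⟨hne, hsub, -⟩ := hp
  obtain ⟨B, hB, hmin⟩ := exists_min_block (Finset.card_pos.1 (by omega)) h
  have hs := hsub B hB
  have hcl : ∀ x ∈ crownGround n, ∀ y ∈ B, crownCover n x y → x ∈ B := by
    intro x hx y hy hxy
    have := hmin (b x) (hb x hx).1 ⟨(hb x hx).1, hB, x, (hb x hx).2, y, hy, Or.inr hxy⟩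
    rw [← this]; exact (hb x hx).2
  have hS : ∀ y ∈ B, Even y → crS n y ∈ B := by
    intro y hy he
    have hm := crS_mem hn (hs hy)
    exact hcl _ hm y hy ((cover_iff hn hm (hs hy)).2 ⟨crS_odd.2 he, Or.inr rfl⟩)
  have hP : ∀ y ∈ B, Even y → crP n y ∈ B := by
    intro y hy he
    have hm := crP_mem hn (hs hy)
    exact hcl _ hm y hy
      ((cover_iff hn hm (hs hy)).2 ⟨(crP_odd (hs hy)).2 he, Or.inl (crSP (hs hy)).symm⟩)
  refine ⟨B, hB, ?_⟩
  have hle := odd_le hn B hs (hc B hB)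
  set O := B.filter (fun x => Odd x) with hO
  set E := B.filter (fun x => Even x) with hE
  have hinj : Set.InjOn (crP n) E := by
    intro x hx y hy hxy
    have hx' := hs (Finset.mem_filter.1 hx).1
    have hy' := hs (Finset.mem_filter.1 hy).1
    rw [← crSP hx', hxy, crSP hy']
  have himg : E.image (crP n) ⊆ O := by
    intro x hx
    obtain ⟨y, hy, rfl⟩ := Finset.mem_image.1 hx
    obtain ⟨hy, he⟩ := Finset.mem_filter.1 hy
    exact Finset.mem_filter.2 ⟨hP y hy he, (crP_odd (hs hy)).2 he⟩
  have hic : (E.image (crP n)).card = E.card := Finset.card_image_of_injOn hinj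
  have hlt : E.card < O.card := by
    by_contra hcon
    have heq : E.image (crP n) = O := Finset.eq_of_subset_of_card_le himg (by omega)
    have hall : crownGround n ⊆ B := by
      refine closed_eq_ground B hs (hne B hB) ?_
      intro x hx
      rcases Nat.even_or_odd x with he | ho
      · exact hS x hx he
      · have : x ∈ E.image (crP n) := by rw [heq]; exact Finset.mem_filter.2 ⟨hx, ho⟩
        obtain ⟨y, hy, rfl⟩ := Finset.mem_image.1 this
        have hy := (Finset.mem_filter.1 hy).1
        rwa [crSP (hs hy)]
    obtain ⟨C, hC, hCB⟩ := Finset.exists_mem_ne (by omega : 1 < π.card) B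
    obtain ⟨x, hx⟩ := hne C hC
    exact hCB ((hbu C hC x hx).symm.trans (hbu B hB x (hall (hsub C hC hx))))
  have : B.card = O.card + E.card := card_split B
  rw [Nat.odd_iff]
  omega

/-- Lemma 3.2: a connected partition of the crown poset `C_{2n}` with at least
two blocks is compatible iff at least one block has odd cardinality. -/
theorem crown_compatible_iff_odd_block (n : ℕ) (hn : 2 ≤ n)
    (π : Finset (Finset ℕ))
    (hconn : IsConnectedPartition (crownGround n) (compGraph (crownLe n)) π)
    (hcard : 2 ≤ π.card) :
    IsCompatible (crownLe n) π ↔ ∃ B ∈ π, Odd B.card := by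
  exact ⟨imp_odd hn hconn hcard, odd_imp hn hconn⟩
end

section
/- For integers n ≥ 1, i and m with 2 ≤ i ≤ 2n and 1 ≤ m ≤ ⌊i/2⌋, the number of partitions of the vertex set of the path graph on 2n vertices into exactly i blocks, each inducing a connected subgraph, such that exactly 2m of the blocks have odd cardinality, equals C(i, 2m) · C(n+m−1, i−1). -/
/-- The path graph on `ℕ` (restricted to a ground set `{1,…,m}`, this is the
path graph `P_m`): consecutive integers are adjacent. -/
def pathGraph : SimpleGraph ℕ := SimpleGraph.fromRel (fun x y => x + 1 = y)

/-- Blocks of consecutive integers with the given sizes. -/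
def toPart : List ℕ → Finset (Finset ℕ)
  | [] => ∅
  | (a :: l) => insert (Finset.Icc (l.sum + 1) (l.sum + a)) (toPart l)

lemma pg_adj (x y : ℕ) : pathGraph.Adj x y ↔ (x + 1 = y ∨ y + 1 = x) := by
  simp only [pathGraph, SimpleGraph.fromRel_adj]
  omega

lemma conn_convex {B : Finset ℕ} (h : BlockConnected pathGraph B) {x y z : ℕ}
    (hx : x ∈ B) (hy : y ∈ B) (hxz : x ≤ z) (hzy : z ≤ y) : z ∈ B := by
  by_contra hz
  have hr : (pathGraph.induce (B : Set ℕ)).Reachable ⟨x, hx⟩ ⟨y, hy⟩ := h.preconnected _ _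
  obtain ⟨w⟩ := hr
  have key : ∀ (u v : (B : Set ℕ)), (pathGraph.induce (B : Set ℕ)).Walk u v →
      u.1 < z → v.1 < z := by
    intro u v w
    induction w with
    | nil => exact id
    | @cons a b c hab _ ih =>
      intro ha
      apply ih
      have h1 : pathGraph.Adj a.1 b.1 := hab
      rw [pg_adj] at h1
      have h2 : b.1 ≠ z := by
        intro e
        exact hz (e ▸ b.2)
      omega
  have hxz' : x ≠ z := by rintro rfl; exact hz hx
  have := key _ _ w (by show x < z; omega)
  have : y < z := this
  omega

lemma conn_Icc (s a : ℕ) (ha : 1 ≤ a) :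
    BlockConnected pathGraph (Finset.Icc (s + 1) (s + a)) := by
  have h0 : s + 1 ∈ ((Finset.Icc (s + 1) (s + a) : Finset ℕ) : Set ℕ) := by
    simp; omega
  have key : ∀ d (hd : s + 1 + d ∈ ((Finset.Icc (s + 1) (s + a) : Finset ℕ) : Set ℕ)),
      (pathGraph.induce ((Finset.Icc (s + 1) (s + a) : Finset ℕ) : Set ℕ)).Reachable
        ⟨s + 1, h0⟩ ⟨s + 1 + d, hd⟩ := by
    intro d
    induction d with
    | zero => intro hd; exact SimpleGraph.Reachable.refl _
    | succ d ih =>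
      intro hd
      have hd' : s + 1 + d ∈ ((Finset.Icc (s + 1) (s + a) : Finset ℕ) : Set ℕ) := by
        simp at hd ⊢; omega
      refine (ih hd').trans (SimpleGraph.Adj.reachable ?_)
      show pathGraph.Adj (s + 1 + d) (s + 1 + (d + 1))
      rw [pg_adj]; omega
  have key2 : ∀ u : ((Finset.Icc (s + 1) (s + a) : Finset ℕ) : Set ℕ),
      (pathGraph.induce ((Finset.Icc (s + 1) (s + a) : Finset ℕ) : Set ℕ)).Reachable
        ⟨s + 1, h0⟩ u := by
    rintro ⟨u, hu⟩
    have hu2 := hu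
    simp only [Finset.coe_Icc, Set.mem_Icc] at hu2
    obtain ⟨d, rfl⟩ := Nat.exists_eq_add_of_le hu2.1
    exact key d hu
  have : Nonempty ((Finset.Icc (s + 1) (s + a) : Finset ℕ) : Set ℕ) := ⟨⟨s + 1, h0⟩⟩
  exact ⟨fun u v => (key2 u).symm.trans (key2 v)⟩

lemma toPart_sub (l : List ℕ) : ∀ B ∈ toPart l, B ⊆ Finset.Icc 1 l.sum := by
  induction l with
  | nil => simp [toPart]
  | cons a l ih =>
    intro B hB
    simp only [toPart, Finset.mem_insert] at hB
    intro x hx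
    rcases hB with rfl | hB
    · simp at hx ⊢; omega
    · have := ih B hB hx
      simp at this ⊢; omega

lemma toPart_nonempty (l : List ℕ) (hl : ∀ a ∈ l, 1 ≤ a) : ∀ B ∈ toPart l, B.Nonempty := by
  induction l with
  | nil => simp [toPart]
  | cons a l ih =>
    intro B hB
    simp only [toPart, Finset.mem_insert] at hB
    rcases hB with rfl | hB
    · have := hl a (by simp)
      simp; omega
    · exact ih (fun b hb => hl b (by simp [hb])) B hB

lemma toPart_conn (l : List ℕ) (hl : ∀ a ∈ l, 1 ≤ a) :
    ∀ B ∈ toPart l, BlockConnected pathGraph B := by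
  induction l with
  | nil => simp [toPart]
  | cons a l ih =>
    intro B hB
    simp only [toPart, Finset.mem_insert] at hB
    rcases hB with rfl | hB
    · exact conn_Icc _ _ (hl a (by simp))
    · exact ih (fun b hb => hl b (by simp [hb])) B hB

lemma toPart_uniq (l : List ℕ) : ∀ x ∈ Finset.Icc 1 l.sum, ∃! B, B ∈ toPart l ∧ x ∈ B := by
  induction l with
  | nil => simp
  | cons a l ih =>
    intro x hx
    by_cases h : x ≤ l.sum
    · obtain ⟨B, ⟨hB, hxB⟩, hu⟩ := ih x (by simp at hx ⊢; omega)
      refine ⟨B, ⟨by simp [toPart, hB], hxB⟩, ?_⟩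
      rintro C ⟨hC, hxC⟩
      simp only [toPart, Finset.mem_insert] at hC
      rcases hC with rfl | hC
      · simp at hxC; omega
      · exact hu C ⟨hC, hxC⟩
    · refine ⟨Finset.Icc (l.sum + 1) (l.sum + a), ⟨by simp [toPart], ?_⟩, ?_⟩
      · simp at hx ⊢; omega
      · rintro C ⟨hC, hxC⟩
        simp only [toPart, Finset.mem_insert] at hC
        rcases hC with rfl | hC
        · rfl
        · have := toPart_sub l C hC hxC
          simp at this; omega

lemma toPart_notMem (l : List ℕ) (a : ℕ) (ha : 1 ≤ a) :
    Finset.Icc (l.sum + 1) (l.sum + a) ∉ toPart l := by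
  intro h
  have h1 := toPart_sub l _ h (show l.sum + 1 ∈ _ by simp; omega)
  simp at h1

lemma toPart_card (l : List ℕ) (hl : ∀ a ∈ l, 1 ≤ a) : (toPart l).card = l.length := by
  induction l with
  | nil => simp [toPart]
  | cons a l ih =>
    rw [toPart, Finset.card_insert_of_notMem (toPart_notMem l a (hl a (by simp))),
      ih (fun b hb => hl b (by simp [hb])), List.length_cons]

lemma toPart_odd (l : List ℕ) (hl : ∀ a ∈ l, 1 ≤ a) :
    ((toPart l).filter (fun B => Odd B.card)).card = (l.map (fun a => a % 2)).sum := by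
  induction l with
  | nil => simp [toPart]
  | cons a l ih =>
    have ih' := ih (fun b hb => hl b (by simp [hb]))
    have hn := toPart_notMem l a (hl a (by simp))
    rw [toPart, Finset.filter_insert]
    have hc : (Finset.Icc (l.sum + 1) (l.sum + a)).card = a := by simp
    rw [hc]
    split_ifs with h
    · rw [Finset.card_insert_of_notMem (by simp [hn]), ih']
      rw [Nat.odd_iff] at h
      simp [h]; omega
    · rw [ih']
      rw [Nat.odd_iff] at h
      have : a % 2 = 0 := by omega
      simp [this]

lemma toPart_inj : ∀ (l l' : List ℕ), (∀ a ∈ l, 1 ≤ a) → (∀ a ∈ l', 1 ≤ a) →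
    l.sum = l'.sum → toPart l = toPart l' → l = l' := by
  intro l
  induction l with
  | nil =>
    intro l' _ hl' hs _
    cases l' with
    | nil => rfl
    | cons b l' =>
      have := hl' b (by simp)
      simp at hs; omega
  | cons a l ih =>
    intro l' hl hl' hs hp
    have ha := hl a (by simp)
    cases l' with
    | nil => simp at hs; omega
    | cons b l' =>
      have hb := hl' b (by simp)
      have hs' := hs
      simp only [List.sum_cons] at hs'
      obtain ⟨B, -, hu⟩ := toPart_uniq (a :: l) (l.sum + a) (by simp; omega)
      have e1 := hu (Finset.Icc (l.sum + 1) (l.sum + a)) ⟨by simp [toPart], by simp; omega⟩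
      have e2 := hu (Finset.Icc (l'.sum + 1) (l'.sum + b))
        ⟨by rw [hp]; simp [toPart], by simp; omega⟩
      have e : Finset.Icc (l.sum + 1) (l.sum + a) = Finset.Icc (l'.sum + 1) (l'.sum + b) :=
        e1.trans e2.symm
      have hc := congrArg Finset.card e
      simp at hc
      have hls : l.sum = l'.sum := by omega
      subst hc
      have hp2 : toPart l = toPart l' := by
        have h1 : toPart l = (toPart (a :: l)).erase (Finset.Icc (l.sum + 1) (l.sum + a)) := by
          rw [toPart, Finset.erase_insert (toPart_notMem l a ha)]
        have h2 : toPart l' = (toPart (a :: l')).erase (Finset.Icc (l'.sum + 1) (l'.sum + a)) := by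
          rw [toPart, Finset.erase_insert (toPart_notMem l' a ha)]
        rw [h1, h2, hp, e]
      rw [ih l' (fun b hb => hl b (by simp [hb])) (fun b hb => hl' b (by simp [hb])) hls hp2]

lemma toPart_isCP (l : List ℕ) (hl : ∀ a ∈ l, 1 ≤ a) :
    IsConnectedPartition (Finset.Icc 1 l.sum) pathGraph (toPart l) :=
  ⟨⟨toPart_nonempty l hl, toPart_sub l, toPart_uniq l⟩, toPart_conn l hl⟩

lemma toPart_surj (N : ℕ) : ∀ π, IsConnectedPartition (Finset.Icc 1 N) pathGraph π →
    ∃ l : List ℕ, (∀ a ∈ l, 1 ≤ a) ∧ l.sum = N ∧ toPart l = π := by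
  induction N using Nat.strong_induction_on with
  | _ N ih =>
    rintro π ⟨⟨hne, hsub, huniq⟩, hconn⟩
    rcases Nat.eq_zero_or_pos N with rfl | hN
    · refine ⟨[], by simp, by simp, ?_⟩
      rw [toPart, eq_comm, Finset.eq_empty_iff_forall_notMem]
      intro B hB
      obtain ⟨x, hx⟩ := hne B hB
      have := hsub B hB hx
      simp at this
    · obtain ⟨B, ⟨hB, hNB⟩, hu⟩ := huniq N (by simp; omega)
      have hmin := B.min'_mem ⟨N, hNB⟩
      have hmin1 := hsub B hB hmin
      obtain ⟨s, hs⟩ : ∃ s, B.min' ⟨N, hNB⟩ = s + 1 :=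
        ⟨B.min' ⟨N, hNB⟩ - 1, by rw [Finset.mem_Icc] at hmin1; omega⟩
      rw [hs] at hmin hmin1
      have hsN : s + 1 ≤ N := (Finset.mem_Icc.1 hmin1).2
      have hBe : B = Finset.Icc (s + 1) N := by
        ext x
        rw [Finset.mem_Icc]
        constructor
        · intro hx
          exact ⟨hs ▸ B.min'_le x hx, (Finset.mem_Icc.1 (hsub B hB hx)).2⟩
        · rintro ⟨h1, h2⟩
          exact conn_convex (hconn B hB) hmin hNB h1 h2
      have hcp : IsConnectedPartition (Finset.Icc 1 s) pathGraph (π.erase B) := by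
        refine ⟨⟨fun C hC => hne C (Finset.mem_of_mem_erase hC), ?_, ?_⟩,
          fun C hC => hconn C (Finset.mem_of_mem_erase hC)⟩
        · intro C hC x hx
          rw [Finset.mem_erase] at hC
          have hx1 := hsub C hC.2 hx
          have hx2 := Finset.mem_Icc.1 hx1
          rw [Finset.mem_Icc]
          refine ⟨hx2.1, ?_⟩
          by_contra hlt
          have hxB : x ∈ B := by rw [hBe, Finset.mem_Icc]; omega
          exact hC.1 ((huniq x hx1).unique ⟨hC.2, hx⟩ ⟨hB, hxB⟩)
        · intro x hx
          rw [Finset.mem_Icc] at hx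
          obtain ⟨C, ⟨hC, hxC⟩, hCu⟩ := huniq x (by rw [Finset.mem_Icc]; omega)
          refine ⟨C, ⟨?_, hxC⟩, fun D hD => hCu D ⟨Finset.mem_of_mem_erase hD.1, hD.2⟩⟩
          rw [Finset.mem_erase]
          refine ⟨?_, hC⟩
          rintro rfl
          rw [hBe, Finset.mem_Icc] at hxC
          omega
      obtain ⟨l, hl, hls, hlp⟩ := ih s (by omega) _ hcp
      refine ⟨(N - s) :: l, ?_, ?_, ?_⟩
      · intro a ha
        rw [List.mem_cons] at ha
        rcases ha with rfl | ha
        · omega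
        · exact hl a ha
      · simp; omega
      · rw [toPart, hlp, hls, show s + (N - s) = N by omega, ← hBe, Finset.insert_erase hB]

/-- The composition attached to a set of odd positions and half sizes. -/
def mk (i : ℕ) (p : Finset (Fin i) × (Fin i → ℕ)) : Fin i → ℕ :=
  fun j => if j ∈ p.1 then 2 * p.2 j + 1 else 2 * p.2 j + 2

lemma mk_inj (i : ℕ) : Function.Injective (mk i) := by
  rintro ⟨S, g⟩ ⟨T, h⟩ e
  have e' : ∀ j, mk i (S, g) j = mk i (T, h) j := fun j => congrFun e j
  simp only [mk] at e'
  have hST : S = T := by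
    ext j
    have := e' j
    split_ifs at this <;> first | omega | tauto
  subst hST
  have : g = h := by
    funext j
    have := e' j
    split_ifs at this <;> omega
  rw [this]

lemma mk_odd (i : ℕ) (p : Finset (Fin i) × (Fin i → ℕ)) : ∑ j, mk i p j % 2 = p.1.card := by
  have : ∀ j, mk i p j % 2 = if j ∈ p.1 then 1 else 0 := by
    intro j
    simp only [mk]
    split_ifs <;> omega
  simp [this]

lemma mk_sum (i : ℕ) (p : Finset (Fin i) × (Fin i → ℕ)) :
    ∑ j, mk i p j + p.1.card = 2 * ∑ j, p.2 j + 2 * i := by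
  have : ∀ j, mk i p j + mk i p j % 2 = 2 * p.2 j + 2 := by
    intro j
    simp only [mk]
    split_ifs <;> omega
  rw [← mk_odd, ← Finset.sum_add_distrib, Finset.sum_congr rfl (fun j _ => this j),
    Finset.sum_add_distrib, Finset.mul_sum]
  simp; ring

lemma mk_surj (i : ℕ) (f : Fin i → ℕ) (hf : ∀ j, 1 ≤ f j) : ∃ p, mk i p = f := by
  refine ⟨(Finset.univ.filter (fun j => f j % 2 = 1), fun j => (f j - 1) / 2), ?_⟩
  funext j
  have := hf j
  simp only [mk, Finset.mem_filter, Finset.mem_univ, true_and]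
  split_ifs <;> omega

lemma mk_pos (i : ℕ) (p : Finset (Fin i) × (Fin i → ℕ)) (j : Fin i) : 1 ≤ mk i p j := by
  simp only [mk]
  split_ifs <;> omega

lemma piAnti_card (i k : ℕ) :
    (Finset.piAntidiag (Finset.univ : Finset (Fin i)) k).card =
      ((Finset.univ : Finset (Fin i)).card + k - 1).choose k := by
  rw [← Finset.card_finsuppAntidiag_nat_eq_choose]
  rw [Finset.finsuppAntidiag, Finset.card_map, Finset.card_attach]

/-- The number of connected partitions of the path graph `P_{2n}` into `i`
blocks, exactly `2m` of which have odd cardinality, is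
`C(i, 2m) · C(n+m−1, i−1)`. -/
theorem path_odd_block_partitions (n i m : ℕ) (hn : 1 ≤ n)
    (hi2 : 2 ≤ i) (hi : i ≤ 2 * n) (hm1 : 1 ≤ m) (hm : m ≤ i / 2) :
    {π : Finset (Finset ℕ) |
        IsConnectedPartition (Finset.Icc 1 (2 * n)) pathGraph π ∧ π.card = i ∧
        (π.filter (fun B => Odd B.card)).card = 2 * m}.ncard
      = i.choose (2 * m) * (n + m - 1).choose (i - 1) := by
  have hset : {π : Finset (Finset ℕ) |
        IsConnectedPartition (Finset.Icc 1 (2 * n)) pathGraph π ∧ π.card = i ∧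
        (π.filter (fun B => Odd B.card)).card = 2 * m} =
      (fun p => toPart (List.ofFn (mk i p))) ''
        {p : Finset (Fin i) × (Fin i → ℕ) | p.1.card = 2 * m ∧ ∑ j, p.2 j + i = n + m} := by
    ext π
    simp only [Set.mem_ofPred_eq, Set.mem_image]
    constructor
    · rintro ⟨hcp, hc, ho⟩
      obtain ⟨l, hl, hls, rfl⟩ := toPart_surj _ _ hcp
      rw [toPart_card l hl] at hc
      rw [toPart_odd l hl] at ho
      subst hc
      obtain ⟨p, hp⟩ := mk_surj l.length l.get (fun j => hl _ (List.get_mem _ _))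
      have hlp : List.ofFn (mk l.length p) = l := by rw [hp, List.ofFn_get]
      have h1 := mk_odd _ p
      have h2 := mk_sum _ p
      rw [← hlp, List.map_ofFn, List.sum_ofFn] at ho
      rw [← hlp, List.sum_ofFn] at hls
      have ho' : ∑ j, mk l.length p j % 2 = 2 * m := by simpa using ho
      have hls' : ∑ j, mk l.length p j = 2 * n := by simpa using hls
      refine ⟨p, ⟨by omega, by omega⟩, by rw [hlp]⟩
    · rintro ⟨p, ⟨h1, h2⟩, rfl⟩
      have hpos : ∀ a ∈ List.ofFn (mk i p), 1 ≤ a := by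
        intro a ha
        rw [List.mem_ofFn] at ha
        obtain ⟨j, rfl⟩ := ha
        exact mk_pos i p j
      have h3 := mk_odd _ p
      have h4 := mk_sum _ p
      have hs : (List.ofFn (mk i p)).sum = 2 * n := by
        rw [List.sum_ofFn]; omega
      refine ⟨hs ▸ toPart_isCP _ hpos, ?_, ?_⟩
      · rw [toPart_card _ hpos, List.length_ofFn]
      · rw [toPart_odd _ hpos, List.map_ofFn, List.sum_ofFn]
        simp only [Function.comp]
        omega
  have hpos : ∀ p, ∀ a ∈ List.ofFn (mk i p), 1 ≤ a := by
    intro p a ha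
    rw [List.mem_ofFn] at ha
    obtain ⟨j, rfl⟩ := ha
    exact mk_pos i p j
  rw [hset, Set.InjOn.ncard_image]
  · by_cases hle : i ≤ n + m
    · have : {p : Finset (Fin i) × (Fin i → ℕ) | p.1.card = 2 * m ∧ ∑ j, p.2 j + i = n + m} =
        ((Finset.powersetCard (2 * m) Finset.univ ×ˢ
          Finset.piAntidiag Finset.univ (n + m - i) : Finset (Finset (Fin i) × (Fin i → ℕ))) :
            Set _) := by
        ext p
        simp only [Set.mem_ofPred_eq, Finset.coe_product, Set.mem_prod, Finset.mem_coe,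
          Finset.mem_powersetCard, Finset.mem_piAntidiag, Finset.subset_univ, true_and,
          Finset.mem_univ, implies_true, and_true]
        constructor
        · rintro ⟨a, b⟩; refine ⟨a, ?_⟩; show ∑ j, p.2 j = _; omega
        · rintro ⟨a, b⟩; refine ⟨a, ?_⟩; change ∑ j, p.2 j = _ at b; omega
      rw [this, Set.ncard_coe_finset, Finset.card_product, Finset.card_powersetCard,
        piAnti_card, Finset.card_univ, Fintype.card_fin]
      congr 1
      rw [show i + (n + m - i) - 1 = n + m - 1 by omega]
      exact Nat.choose_symm_of_eq_add (by omega)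
    · have : {p : Finset (Fin i) × (Fin i → ℕ) | p.1.card = 2 * m ∧ ∑ j, p.2 j + i = n + m} = ∅ := by
        ext p
        simp only [Set.mem_ofPred_eq, Set.mem_empty_iff_false, iff_false]
        omega
      rw [this, Set.ncard_empty, Nat.choose_eq_zero_of_lt (show n + m - 1 < i - 1 by omega), mul_zero]
  · rintro p ⟨hp1, hp2⟩ q ⟨hq1, hq2⟩ e
    apply mk_inj
    apply List.ofFn_injective
    have h1 := mk_sum _ p
    have h2 := mk_sum _ q
    exact toPart_inj _ _ (hpos p) (hpos q) (by rw [List.sum_ofFn, List.sum_ofFn]; omega) e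
end

section
/- For integers n ≥ 2, i and m with 2 ≤ i ≤ 2n and 1 ≤ m ≤ ⌊i/2⌋, let N be the number of partitions of the vertex set of the cycle graph on 2n vertices into exactly i blocks, each inducing a connected subgraph, such that exactly 2m of the blocks have odd cardinality. Then i · N = 2n · C(i, 2m) · C(n+m−1, i−1); equivalently, N = (2n/i) · C(i,2m) · C(n+m−1, i−1). -/
/-- The cycle graph `O_{2n}` on the vertex set `{1,…,2n}`: consecutive integers
are adjacent, and `1` is adjacent to `2n`. -/
def cycleGraph (n : ℕ) : SimpleGraph ℕ :=
  SimpleGraph.fromRel (fun x y => x + 1 = y ∨ (x = 1 ∧ y = 2 * n))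

/-- lists of positive parts -/
def TL (L i k : ℕ) : Set (List ℕ) :=
  {l | (∀ a ∈ l, 1 ≤ a) ∧ l.sum = L ∧ l.length = i ∧ l.countP (fun a => a % 2 = 1) = k}

def bump : List ℕ → List ℕ
  | [] => []
  | a :: l => (a + 2) :: l

lemma bump_inj : Function.Injective bump := by
  intro a b h
  cases a <;> cases b <;> simp_all [bump]

lemma TL_zero (i k : ℕ) : TL 0 (i+1) k = ∅ := by
  ext l
  simp only [TL, Set.mem_ofPred_eq, Set.mem_empty_iff_false, iff_false]
  rintro ⟨h1, h2, h3, -⟩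
  cases l with
  | nil => simp at h3
  | cons a l => have := h1 a (by simp); simp at h2; omega

lemma TL_len1 (L k : ℕ) : TL (L+1) 1 k = if k = (L+1) % 2 then {[L+1]} else ∅ := by
  ext l
  simp only [TL, Set.mem_ofPred_eq]
  constructor
  · rintro ⟨h1, h2, h3, h4⟩
    obtain ⟨a, rfl⟩ := List.length_eq_one_iff.1 h3
    simp at h2
    subst h2
    simp [List.countP_cons] at h4
    rw [if_pos (by split_ifs at h4 <;> omega)]
    rfl
  · intro h
    split_ifs at h with hk
    · obtain rfl : l = [L+1] := h
      simp [List.countP_cons]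
      split_ifs <;> omega
    · exact h.elim

lemma TL_one (i k : ℕ) : TL 1 (i+2) k = ∅ := by
  ext l
  simp only [TL, Set.mem_ofPred_eq, Set.mem_empty_iff_false, iff_false]
  rintro ⟨h1, h2, h3, -⟩
  match l with
  | [] => simp at h3
  | [a] => simp at h3
  | a :: b :: l => 
    have := h1 a (by simp)
    have := h1 b (by simp)
    simp at h2; omega

lemma TL_succ (L i k : ℕ) : (TL (L+2) (i+1) (k+1)).encard =
    (TL (L+1) i k).encard + (TL L i (k+1)).encard + (TL L (i+1) (k+1)).encard := by
  have : TL (L+2) (i+1) (k+1) = (List.cons 1 '' TL (L+1) i k ∪ List.cons 2 '' TL L i (k+1)) ∪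
      bump '' TL L (i+1) (k+1) := by
    ext l
    simp only [TL, Set.mem_union, Set.mem_image, Set.mem_ofPred_eq]
    constructor
    · rintro ⟨h1, h2, h3, h4⟩
      match l with
      | [] => simp at h3
      | 0 :: l => simp at h1
      | 1 :: l =>
        refine Or.inl (Or.inl ⟨l, ⟨fun a ha => h1 a (by simp [ha]), ?_, ?_, ?_⟩, rfl⟩)
        all_goals simp at h2 h3 h4; omega
      | 2 :: l =>
        refine Or.inl (Or.inr ⟨l, ⟨fun a ha => h1 a (by simp [ha]), ?_, ?_, ?_⟩, rfl⟩)
        all_goals simp at h2 h3 h4; omega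
      | (a + 3) :: l =>
        refine Or.inr ⟨(a+1) :: l, ⟨?_, ?_, ?_, ?_⟩, by simp [bump]⟩
        · intro b hb
          rcases List.mem_cons.1 hb with rfl | hb
          · omega
          · exact h1 b (by simp [hb])
        · simp at h2 ⊢; omega
        · simpa using h3
        · rw [List.countP_cons] at h4 ⊢
          have : (a + 3) % 2 = (a+1) % 2 := by omega
          rw [this] at h4; exact h4
    · rintro ((⟨l, ⟨h1, h2, h3, h4⟩, rfl⟩ | ⟨l, ⟨h1, h2, h3, h4⟩, rfl⟩) | ⟨l, ⟨h1, h2, h3, h4⟩, rfl⟩)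
      · refine ⟨by simpa using h1, ?_, ?_, ?_⟩ <;> simp <;> omega
      · refine ⟨by simpa using h1, ?_, ?_, ?_⟩ <;> simp <;> omega
      · match l with
        | [] => simp at h3
        | a :: l =>
          simp only [bump]
          refine ⟨?_, ?_, ?_, ?_⟩
          · intro b hb
            rcases List.mem_cons.1 hb with rfl | hb
            · omega
            · exact h1 b (by simp [hb])
          · simp at h2 ⊢; omega
          · simpa using h3
          · rw [List.countP_cons] at h4 ⊢
            have : (a + 2) % 2 = a % 2 := by omega
            rw [this]; exact h4
  rw [this, Set.encard_union_eq, Set.encard_union_eq, List.cons_injective.encard_image,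
    List.cons_injective.encard_image, bump_inj.encard_image]
  · rw [Set.disjoint_left]
    rintro _ ⟨l, -, rfl⟩ ⟨l', -, h⟩
    simp at h
  · rw [Set.disjoint_left]
    rintro _ (⟨l, -, rfl⟩ | ⟨l, -, rfl⟩) ⟨l', ⟨h1, -⟩, h⟩
    all_goals
      cases l' with
      | nil => simp [bump] at h
      | cons a l' => have := h1 a (by simp); simp [bump] at h <;> omega

lemma TL_k0 (L i : ℕ) : (TL (L+2) (i+1) 0).encard =
    (TL L i 0).encard + (TL L (i+1) 0).encard := by
  have : TL (L+2) (i+1) 0 = List.cons 2 '' TL L i 0 ∪ bump '' TL L (i+1) 0 := by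
    ext l
    simp only [TL, Set.mem_union, Set.mem_image, Set.mem_ofPred_eq]
    constructor
    · rintro ⟨h1, h2, h3, h4⟩
      match l with
      | [] => simp at h3
      | 0 :: l => simp at h1
      | 1 :: l => simp at h4
      | 2 :: l =>
        refine (Or.inl ⟨l, ⟨fun a ha => h1 a (by simp [ha]), ?_, ?_, ?_⟩, rfl⟩)
        · simp at h2; omega
        · simpa using h3
        · simpa using h4
      | (a + 3) :: l =>
        refine Or.inr ⟨(a+1) :: l, ⟨?_, ?_, ?_, ?_⟩, by simp [bump]⟩
        · intro b hb
          rcases List.mem_cons.1 hb with rfl | hb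
          · omega
          · exact h1 b (by simp [hb])
        · simp at h2 ⊢; omega
        · simpa using h3
        · rw [List.countP_cons] at h4 ⊢
          have : (a + 3) % 2 = (a+1) % 2 := by omega
          rw [this] at h4; exact h4
    · rintro (⟨l, ⟨h1, h2, h3, h4⟩, rfl⟩ | ⟨l, ⟨h1, h2, h3, h4⟩, rfl⟩)
      · refine ⟨by simpa using h1, ?_, ?_, ?_⟩
        · simp; omega
        · simp; omega
        · simpa using h4
      · match l with
        | [] => simp at h3
        | a :: l =>
          simp only [bump]
          refine ⟨?_, ?_, ?_, ?_⟩
          · intro b hb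
            rcases List.mem_cons.1 hb with rfl | hb
            · omega
            · exact h1 b (by simp [hb])
          · simp at h2 ⊢; omega
          · simpa using h3
          · rw [List.countP_cons] at h4 ⊢
            have : (a + 2) % 2 = a % 2 := by omega
            rw [this]; exact h4
  rw [this, Set.encard_union_eq, List.cons_injective.encard_image, bump_inj.encard_image]
  · rw [Set.disjoint_left]
    rintro _ ⟨l, -, rfl⟩ ⟨l', ⟨h1, -⟩, h⟩
    cases l' with
    | nil => simp [bump] at h
    | cons a l' => have := h1 a (by simp); simp [bump] at h <;> omega

lemma choose_zero_aux (i k t : ℕ) (h : k + 1 = 2 * t) : (i+2).choose k * (t-1).choose (i+1) = 0 := by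
  by_cases h1 : i + 2 < k
  · rw [Nat.choose_eq_zero_of_lt h1]; simp
  · rw [Nat.choose_eq_zero_of_lt (n := t-1) (by omega)]; simp

lemma choose_zero_aux2 (i k t : ℕ) (h : k = 2 * t) : (i+2).choose k * (t-1).choose (i+1) = 0 := by
  by_cases h1 : i + 2 < k
  · rw [Nat.choose_eq_zero_of_lt h1]; simp
  · rw [Nat.choose_eq_zero_of_lt (n := t-1) (by omega)]; simp

lemma TL_card (L : ℕ) : ∀ i k t : ℕ, 1 ≤ L ∨ 1 ≤ i ∨ 1 ≤ t → L + k = 2 * t →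
    (TL L (i+1) k).encard = (((i+1).choose k * (t-1).choose i : ℕ) : ℕ∞) := by
  induction L using Nat.strong_induction_on with
  | _ L IH =>
    intro i k t hL h
    match L, i with
    | 0, 0 => 
      rw [TL_zero, Nat.choose_eq_zero_of_lt (n := 0+1) (by omega)]; simp
    | L+1, 0 =>
      rw [TL_len1]
      split_ifs with hk
      · rcases Nat.mod_two_eq_zero_or_one (L+1) with h' | h' <;> rw [hk, h'] <;> simp
      · rw [Nat.choose_eq_zero_of_lt (n := 0+1) (by omega)]; simp
    | 0, i+1 =>
      rw [TL_zero, choose_zero_aux2 _ _ _ (by omega)]; simp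
    | 1, i+1 =>
      rw [TL_one, choose_zero_aux _ _ _ (by omega)]; simp
    | L+2, i+1 =>
      obtain ⟨t, rfl⟩ : ∃ t', t = t' + 1 := ⟨t-1, by omega⟩
      cases k with
      | zero =>
        rw [TL_k0]
        cases t with
        | zero =>
          obtain rfl : L = 0 := by omega
          rw [TL_zero, TL_zero]; simp
        | succ t =>
          rw [IH L (by omega) i 0 (t+1) (by omega) (by omega),
            IH L (by omega) (i+1) 0 (t+1) (by omega) (by omega)]
          norm_cast
          simp [Nat.choose_succ_succ]
      | succ k =>
        obtain ⟨t, rfl⟩ : ∃ t', t = t' + 1 := ⟨t-1, by omega⟩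
        rw [TL_succ, IH (L+1) (by omega) i k (t+1) (by omega) (by omega),
          IH L (by omega) i (k+1) (t+1) (by omega) (by omega),
            IH L (by omega) (i+1) (k+1) (t+1) (by omega) (by omega)]
        norm_cast
        simp [Nat.choose_succ_succ]
        ring
/-- cyclic shift -/
def sg (N : ℕ) : Equiv.Perm ℕ where
  toFun x := if x = 0 ∨ N < x then x else if x = N then 1 else x + 1
  invFun x := if x = 0 ∨ N < x then x else if x = 1 then N else x - 1
  left_inv x := by grind
  right_inv x := by grind

lemma sg_apply (N x : ℕ) : sg N x = if x = 0 ∨ N < x then x else if x = N then 1 else x + 1 := rfl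
lemma sg_symm (N x : ℕ) : (sg N).symm x =
  if x = 0 ∨ N < x then x else if x = 1 then N else x - 1 := rfl

def Good (N : ℕ) (π : Finset (Finset ℕ)) : Prop :=
  IsPartitionOn (Finset.Icc 1 N) π ∧ ∀ B ∈ π, ∃! x, x ∈ B ∧ (sg N).symm x ∉ B

def IsStart (N : ℕ) (π : Finset (Finset ℕ)) (s : ℕ) : Prop :=
  ∃ B ∈ π, s ∈ B ∧ (sg N).symm s ∉ B

def rot (N : ℕ) (π : Finset (Finset ℕ)) : Finset (Finset ℕ) :=
  π.map (Finset.mapEmbedding (sg N).toEmbedding).toEmbedding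

lemma mem_rot (N : ℕ) (π : Finset (Finset ℕ)) (B : Finset ℕ) :
    B ∈ rot N π ↔ ∃ A ∈ π, A.map (sg N).toEmbedding = B := by
  simp [rot]

lemma rot_inj (N : ℕ) : Function.Injective (rot N) := Finset.map_injective _

lemma rot_card (N : ℕ) (π : Finset (Finset ℕ)) : (rot N π).card = π.card := Finset.card_map _

lemma rot_odd (N : ℕ) (π : Finset (Finset ℕ)) :
    ((rot N π).filter (fun B => Odd B.card)).card = (π.filter (fun B => Odd B.card)).card := by
  rw [rot, Finset.filter_map, Finset.card_map]
  congr 1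
  ext B
  simp

lemma sg_mem (N x : ℕ) : (sg N).symm x ∈ Finset.Icc 1 N ↔ x ∈ Finset.Icc 1 N := by
  rw [sg_symm]; simp only [Finset.mem_Icc]; grind

lemma rot_start (N : ℕ) (π : Finset (Finset ℕ)) (s : ℕ) (h : IsStart N π s) :
    IsStart N (rot N π) (sg N s) := by
  obtain ⟨B, hB, h1, h2⟩ := h
  refine ⟨_, (mem_rot _ _ _).2 ⟨B, hB, rfl⟩, ?_, ?_⟩
  · simpa [Finset.mem_map_equiv] using h1
  · simpa [Finset.mem_map_equiv] using h2

lemma rot_good (N : ℕ) (π : Finset (Finset ℕ)) (h : Good N π) : Good N (rot N π) := by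
  obtain ⟨⟨h1, h2, h3⟩, h4⟩ := h
  refine ⟨⟨?_, ?_, ?_⟩, ?_⟩
  · intro B hB
    obtain ⟨A, hA, rfl⟩ := (mem_rot _ _ _).1 hB
    simpa using h1 A hA
  · intro B hB x hx
    obtain ⟨A, hA, rfl⟩ := (mem_rot _ _ _).1 hB
    rw [Finset.mem_map_equiv] at hx
    exact (sg_mem N x).1 (h2 A hA hx)
  · intro x hx
    obtain ⟨A, ⟨hA, hxA⟩, hu⟩ := h3 _ ((sg_mem N x).2 hx)
    refine ⟨_, ⟨(mem_rot _ _ _).2 ⟨A, hA, rfl⟩, by rwa [Finset.mem_map_equiv]⟩, ?_⟩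
    rintro B ⟨hB, hxB⟩
    obtain ⟨A', hA', rfl⟩ := (mem_rot _ _ _).1 hB
    rw [Finset.mem_map_equiv] at hxB
    rw [hu A' ⟨hA', hxB⟩]
  · intro B hB
    obtain ⟨A, hA, rfl⟩ := (mem_rot _ _ _).1 hB
    obtain ⟨x, ⟨hx1, hx2⟩, hu⟩ := h4 A hA
    refine ⟨sg N x, ⟨by simpa [Finset.mem_map_equiv] using hx1, by simpa [Finset.mem_map_equiv] using hx2⟩, ?_⟩
    rintro y ⟨hy1, hy2⟩
    rw [Finset.mem_map_equiv] at hy1 hy2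
    rw [← hu _ ⟨hy1, hy2⟩]; simp

lemma part_fin (N : ℕ) : {π | IsPartitionOn (Finset.Icc 1 N) π}.Finite := by
  apply Set.Finite.subset (Finset.finite_toSet (Finset.Icc 1 N).powerset.powerset)
  intro π h
  refine Finset.mem_coe.2 (Finset.mem_powerset.2 ?_)
  intro B hB
  exact Finset.mem_powerset.2 (h.2.1 B hB)

def GS (N i k : ℕ) : Set (Finset (Finset ℕ)) :=
  {π | Good N π ∧ π.card = i ∧ (π.filter (fun B => Odd B.card)).card = k}

def GSs (N i k s : ℕ) : Set (Finset (Finset ℕ)) := {π | π ∈ GS N i k ∧ IsStart N π s}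

lemma GS_fin (N i k : ℕ) : (GS N i k).Finite := (part_fin N).subset fun _ h => h.1.1
lemma GSs_fin (N i k s : ℕ) : (GSs N i k s).Finite := (GS_fin N i k).subset fun _ h => h.1

lemma GSs_le (N i k s : ℕ) : (GSs N i k s).ncard ≤ (GSs N i k (sg N s)).ncard := by
  rw [← Set.ncard_image_of_injective _ (rot_inj N)]
  apply Set.ncard_le_ncard _ (GSs_fin _ _ _ _)
  rintro _ ⟨π, ⟨⟨h1, h2, h3⟩, h4⟩, rfl⟩
  exact ⟨⟨rot_good _ _ h1, by rw [rot_card, h2], by rw [rot_odd, h3]⟩, rot_start _ _ _ h4⟩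

lemma GSs_eq (N i k s : ℕ) (h1 : 1 ≤ s) (h2 : s ≤ N) :
    (GSs N i k s).ncard = (GSs N i k 1).ncard := by
  have key : ∀ a b, 1 ≤ a → a ≤ b → b ≤ N → (GSs N i k a).ncard ≤ (GSs N i k b).ncard := by
    intro a b ha hab hb
    induction b, hab using Nat.le_induction with
    | base => exact le_rfl
    | succ b hab ih =>
      refine (ih (by omega)).trans ((GSs_le N i k b).trans_eq ?_)
      rw [sg_apply, if_neg (by omega), if_neg (by omega)]
  apply le_antisymm
  · refine (key s N h1 h2 le_rfl).trans ((GSs_le N i k N).trans_eq ?_)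
    rw [sg_apply, if_neg (by omega), if_pos rfl]
  · exact key 1 s le_rfl h1 h2

lemma card_starts (N : ℕ) (π : Finset (Finset ℕ)) (h : Good N π) [DecidablePred (IsStart N π)] :
    ((Finset.Icc 1 N).filter (IsStart N π)).card = π.card := by
  symm
  choose! f hf hu using h.2
  apply Finset.card_bij (fun B _ => f B)
  · intro B hB
    simp only [Finset.mem_filter]
    exact ⟨h.1.2.1 B hB (hf B hB).1, B, hB, hf B hB⟩
  · intro B hB C hC hBC
    exact (h.1.2.2 (f B) (h.1.2.1 B hB (hf B hB).1)).unique ⟨hB, (hf B hB).1⟩ ⟨hC, hBC ▸ (hf C hC).1⟩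
  · intro x hx
    obtain ⟨-, B, hB, h1⟩ := Finset.mem_filter.1 hx
    exact ⟨B, hB, (hu B hB x h1).symm⟩

open Classical in
lemma double_count (N i k : ℕ) : i * (GS N i k).ncard = N * (GSs N i k 1).ncard := by
  have h := Finset.sum_card_bipartiteAbove_eq_sum_card_bipartiteBelow
    (s := (GS_fin N i k).toFinset) (t := Finset.Icc 1 N) (fun π s => IsStart N π s)
  have h1 : ∀ π ∈ (GS_fin N i k).toFinset,
      (Finset.bipartiteAbove (fun π s => IsStart N π s) (Finset.Icc 1 N) π).card = i := by
    intro π hπ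
    rw [Set.Finite.mem_toFinset] at hπ
    rw [← hπ.2.1]
    exact card_starts N π hπ.1
  have h2 : ∀ s ∈ Finset.Icc 1 N,
      (Finset.bipartiteBelow (fun π s => IsStart N π s) (GS_fin N i k).toFinset s).card
        = (GSs N i k 1).ncard := by
    intro s hs
    rw [Finset.mem_Icc] at hs
    rw [← GSs_eq N i k s hs.1 hs.2, ← Set.ncard_coe_finset]
    congr 1
    ext π
    simp [GSs, Finset.bipartiteBelow]
  rw [Finset.sum_congr rfl h1, Finset.sum_congr rfl h2] at h
  simp only [Finset.sum_const, Nat.card_Icc, smul_eq_mul, Nat.add_sub_cancel] at h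
  rw [← h, mul_comm, Set.ncard_eq_toFinset_card _ (GS_fin N i k)]
def LP (L : ℕ) (π : Finset (Finset ℕ)) : Prop :=
  IsPartitionOn (Finset.Icc 1 L) π ∧ ∀ B ∈ π, ∀ x ∈ B, ∀ y ∈ B, ∀ z, x ≤ z → z ≤ y → z ∈ B

def PL : List ℕ → Finset (Finset ℕ)
  | [] => ∅
  | a :: l => insert (Finset.Icc (l.sum + 1) (l.sum + a)) (PL l)

lemma PL_LP (l : List ℕ) (h : ∀ a ∈ l, 1 ≤ a) : LP l.sum (PL l) := by
  induction l with
  | nil => simp [LP, PL, IsPartitionOn]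
  | cons a l ih =>
    obtain ⟨⟨h1, h2, h3⟩, h4⟩ := ih (fun b hb => h b (by simp [hb]))
    have ha := h a (by simp)
    have hs : (a :: l).sum = l.sum + a := by simp; omega
    rw [hs]
    refine ⟨⟨?_, ?_, ?_⟩, ?_⟩
    · intro B hB
      rcases Finset.mem_insert.1 hB with rfl | hB
      · exact ⟨l.sum + 1, by simp; omega⟩
      · exact h1 B hB
    · intro B hB x hx
      rcases Finset.mem_insert.1 hB with rfl | hB
      · simp at hx ⊢; omega
      · have := h2 B hB hx
        simp at this ⊢; omega
    · intro x hx
      rw [Finset.mem_Icc] at hx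
      by_cases hxl : x ≤ l.sum
      · obtain ⟨B, ⟨hB, hxB⟩, hu⟩ := h3 x (by simp; omega)
        refine ⟨B, ⟨Finset.mem_insert_of_mem hB, hxB⟩, ?_⟩
        rintro C ⟨hC, hxC⟩
        rcases Finset.mem_insert.1 hC with rfl | hC
        · simp at hxC; omega
        · exact hu C ⟨hC, hxC⟩
      · refine ⟨_, ⟨Finset.mem_insert_self _ _, by simp; omega⟩, ?_⟩
        rintro C ⟨hC, hxC⟩
        rcases Finset.mem_insert.1 hC with rfl | hC
        · rfl
        · have := h2 C hC hxC
          simp at this; omega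
    · intro B hB x hx y hy z hxz hzy
      rcases Finset.mem_insert.1 hB with rfl | hB
      · simp at hx hy ⊢; omega
      · exact h4 B hB x hx y hy z hxz hzy

lemma PL_not (a : ℕ) (l : List ℕ) (h : ∀ b ∈ a :: l, 1 ≤ b) :
    Finset.Icc (l.sum + 1) (l.sum + a) ∉ PL l := by
  intro hB
  have h2 := (PL_LP l (fun b hb => h b (by simp [hb]))).1.2.1 _ hB
  have ha := h a (by simp)
  have := h2 (show l.sum + 1 ∈ _ by simp; omega)
  simp at this

lemma PL_card (l : List ℕ) (h : ∀ a ∈ l, 1 ≤ a) : (PL l).card = l.length := by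
  induction l with
  | nil => rfl
  | cons a l ih =>
    rw [PL, Finset.card_insert_of_notMem (PL_not a l h), ih (fun b hb => h b (by simp [hb]))]
    rfl

lemma PL_odd (l : List ℕ) (h : ∀ a ∈ l, 1 ≤ a) :
    ((PL l).filter (fun B => Odd B.card)).card = l.countP (fun a => a % 2 = 1) := by
  induction l with
  | nil => rfl
  | cons a l ih =>
    have ih := ih (fun b hb => h b (by simp [hb]))
    have hc : (Finset.Icc (l.sum + 1) (l.sum + a)).card = a := by simp
    rw [PL, Finset.filter_insert, List.countP_cons, hc]
    split_ifs with h1 h2 h2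
    · rw [Finset.card_insert_of_notMem (fun h' => PL_not a l h (Finset.mem_filter.1 h').1), ih]
    · simp [Nat.odd_iff] at h1 h2; omega
    · simp [Nat.odd_iff] at h1 h2; omega
    · rw [ih]; rfl

lemma PL_inj (l : List ℕ) : ∀ l' : List ℕ, (∀ a ∈ l, 1 ≤ a) → (∀ a ∈ l', 1 ≤ a) →
    l.sum = l'.sum → PL l = PL l' → l = l' := by
  induction l with
  | nil =>
    intro l' h h' hs _
    cases l' with
    | nil => rfl
    | cons a l' => have := h' a (by simp); simp at hs; omega
  | cons a l ih =>
    intro l' h h' hs he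
    have ha := h a (by simp)
    cases l' with
    | nil => simp at hs; omega
    | cons b l' =>
      have hb := h' b (by simp)
      have hs' : l.sum + a = l'.sum + b := by simp at hs; omega
      have hP := (PL_LP (a :: l) h).1.2.2 (l.sum + a) (by simp; omega)
      have hE : Finset.Icc (l.sum + 1) (l.sum + a) = Finset.Icc (l'.sum + 1) (l'.sum + b) := by
        apply hP.unique
        · exact ⟨Finset.mem_insert_self _ _, by simp; omega⟩
        · rw [he]
          exact ⟨Finset.mem_insert_self _ _, by simp; omega⟩
      have hab : a = b := by
        have := congrArg Finset.card hE
        simpa using this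
      subst hab
      rw [ih l' (fun b hb => h b (by simp [hb])) (fun b hb => h' b (by simp [hb])) (by omega)]
      have e1 : PL l = (PL (a :: l)).erase (Finset.Icc (l.sum + 1) (l.sum + a)) := by
        rw [PL, Finset.erase_insert (PL_not a l h)]
      have e2 : PL l' = (PL (a :: l')).erase (Finset.Icc (l'.sum + 1) (l'.sum + a)) := by
        rw [PL, Finset.erase_insert (PL_not a l' h')]
      rw [e1, e2, he, hE]

lemma PL_surj (L : ℕ) : ∀ π, LP L π → ∃ l : List ℕ, (∀ a ∈ l, 1 ≤ a) ∧ l.sum = L ∧ PL l = π := by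
  induction L using Nat.strong_induction_on with
  | _ L IH =>
    rintro π ⟨⟨h1, h2, h3⟩, h4⟩
    rcases Nat.eq_zero_or_pos L with rfl | hL
    · refine ⟨[], by simp, rfl, ?_⟩
      symm
      apply Finset.eq_empty_of_forall_notMem
      intro B hB
      obtain ⟨x, hx⟩ := h1 B hB
      have := h2 B hB hx
      simp at this
    · obtain ⟨B, ⟨hB, hLB⟩, hu⟩ := h3 L (by simp; omega)
      have hmin := B.min'_mem ⟨L, hLB⟩
      have hmin' : ∀ x ∈ B, B.min' ⟨L, hLB⟩ ≤ x := fun x hx => Finset.min'_le _ _ hx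
      set s := B.min' ⟨L, hLB⟩
      have hs := h2 B hB hmin
      rw [Finset.mem_Icc] at hs
      have hBe : B = Finset.Icc s L := by
        ext x
        rw [Finset.mem_Icc]
        constructor
        · intro hx
          have := h2 B hB hx
          rw [Finset.mem_Icc] at this
          exact ⟨hmin' x hx, this.2⟩
        · rintro ⟨hx1, hx2⟩
          exact h4 B hB s hmin L hLB x hx1 hx2
      obtain ⟨l, hl1, hl2, hl3⟩ := IH (s-1) (by omega) (π.erase B) (by
        refine ⟨⟨fun C hC => h1 C (Finset.mem_of_mem_erase hC), ?_, ?_⟩,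
          fun C hC => h4 C (Finset.mem_of_mem_erase hC)⟩
        · intro C hC x hx
          have hx' := h2 C (Finset.mem_of_mem_erase hC) hx
          rw [Finset.mem_Icc] at hx' ⊢
          refine ⟨hx'.1, ?_⟩
          by_contra hcon
          apply Finset.ne_of_mem_erase hC
          apply (h3 x (by simp; omega)).unique ⟨Finset.mem_of_mem_erase hC, hx⟩ ⟨hB, _⟩
          rw [hBe]; simp; omega
        · intro x hx
          rw [Finset.mem_Icc] at hx
          obtain ⟨C, ⟨hC, hxC⟩, hu'⟩ := h3 x (by simp; omega)
          refine ⟨C, ⟨Finset.mem_erase.2 ⟨?_, hC⟩, hxC⟩,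
            fun D hD => hu' D ⟨Finset.mem_of_mem_erase hD.1, hD.2⟩⟩
          rintro rfl
          have := hmin' x hxC
          omega)
      refine ⟨(L + 1 - s) :: l, ?_, by simp; omega, ?_⟩
      · intro b hb
        rcases List.mem_cons.1 hb with rfl | hb
        · omega
        · exact hl1 b hb
      · rw [PL, hl2, hl3, show s - 1 + 1 = s by omega, show s - 1 + (L + 1 - s) = L by omega, ← hBe,
          Finset.insert_erase hB]
lemma pred_closed (N : ℕ) (B : Finset ℕ) (hB : B ⊆ Finset.Icc 1 N) (hne : B.Nonempty)
    (h : ∀ x ∈ B, (sg N).symm x ∈ B) : B = Finset.Icc 1 N := by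
  have down : ∀ d x, x ∈ B → 1 ≤ x - d → x - d ∈ B := by
    intro d
    induction d with
    | zero => intro x hx _; exact hx
    | succ d ih =>
      intro x hx hd
      have h1 := h _ (ih x hx (by omega))
      have h2 := hB (ih x hx (by omega))
      rw [Finset.mem_Icc] at h2
      rw [sg_symm, if_neg (by omega), if_neg (by omega)] at h1
      exact h1
  obtain ⟨x, hx⟩ := hne
  have hx' := hB hx
  rw [Finset.mem_Icc] at hx'
  have h1 : 1 ∈ B := by
    have := down (x-1) x hx (by omega)
    rwa [show x - (x-1) = 1 by omega] at this
  have hN : N ∈ B := by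
    have := h 1 h1
    rwa [sg_symm, if_neg (by omega), if_pos rfl] at this
  apply le_antisymm hB
  intro y hy
  rw [Finset.mem_Icc] at hy
  have := down (N-y) N hN (by omega)
  rwa [show N - (N-y) = y by omega] at this

lemma adj_iff (n : ℕ) (hn : 2 ≤ n) (x y : ℕ) (hx : x ∈ Finset.Icc 1 (2*n))
    (hy : y ∈ Finset.Icc 1 (2*n)) :
    (cycleGraph n).Adj x y ↔ (sg (2*n) x = y ∨ sg (2*n) y = x) := by
  rw [Finset.mem_Icc] at hx hy
  rw [sg_apply, sg_apply, cycleGraph, SimpleGraph.fromRel_adj]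
  grind

lemma conn_iff (n : ℕ) (hn : 2 ≤ n) (B : Finset ℕ) (hB : B ⊆ Finset.Icc 1 (2*n)) (hne : B.Nonempty)
    (hp : B ≠ Finset.Icc 1 (2*n)) :
    BlockConnected (cycleGraph n) B ↔ ∃! x, x ∈ B ∧ (sg (2*n)).symm x ∉ B := by
  constructor
  · intro hc
    have hex : ∃ x, x ∈ B ∧ (sg (2*n)).symm x ∉ B := by
      by_contra hcon
      push Not at hcon
      exact hp (pred_closed _ B hB hne hcon)
    obtain ⟨x, hx, hx'⟩ := hex
    refine ⟨x, ⟨hx, hx'⟩, ?_⟩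
    rintro y ⟨hy, hy'⟩
    have hr := hc.preconnected ⟨x, hx⟩ ⟨y, hy⟩
    rw [SimpleGraph.reachable_iff_reflTransGen] at hr
    have key : ∀ z : (B : Set ℕ), Relation.ReflTransGen
        ((cycleGraph n).induce (B : Set ℕ)).Adj ⟨x, hx⟩ z →
        Relation.ReflTransGen (fun u v => v = sg (2*n) u ∧ u ∈ B) x z.1 := by
      intro z hz
      induction hz with
      | refl => exact Relation.ReflTransGen.refl
      | @tail b c _ hbc ih =>
        have hbc' : (cycleGraph n).Adj b.1 c.1 := hbc
        rw [adj_iff n hn _ _ (hB b.2) (hB c.2)] at hbc'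
        rcases hbc' with h | h
        · exact ih.tail ⟨h.symm, b.2⟩
        · rcases Relation.ReflTransGen.cases_tail ih with h' | ⟨u, hu, hu', -⟩
          · exfalso
            apply hx'
            rw [← h', ← h, Equiv.symm_apply_apply]
            exact c.2
          · rw [← h] at hu'
            rw [(sg (2*n)).injective hu']
            exact hu
    rcases Relation.ReflTransGen.cases_tail (key _ hr) with h' | ⟨u, hu, hu', huB⟩
    · exact h'
    · exfalso
      apply hy'
      simp only at hu'
      rw [hu', Equiv.symm_apply_apply]
      exact huB
  · rintro ⟨x, ⟨hx, hx'⟩, hu⟩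
    classical
    let R : ℕ → Prop := fun y => ∀ hy : y ∈ B,
      ((cycleGraph n).induce (B : Set ℕ)).Reachable ⟨x, hx⟩ ⟨y, hy⟩
    have hall : ∀ y ∈ B, R y := by
      by_contra hcon
      push Not at hcon
      obtain ⟨y, hy, hyR⟩ := hcon
      have hD := pred_closed (2*n) (B.filter (fun y => ¬ R y))
        ((Finset.filter_subset _ _).trans hB) ⟨y, by simp [hy, hyR]⟩ (by
          intro z hz
          obtain ⟨hz, hzR⟩ := Finset.mem_filter.1 hz
          have hpz : (sg (2*n)).symm z ∈ B := by
            by_contra hcon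
            obtain rfl := hu z ⟨hz, hcon⟩
            exact hzR fun _ => SimpleGraph.Reachable.refl _
          refine Finset.mem_filter.2 ⟨hpz, fun hR => hzR fun hz => (hR hpz).trans ?_⟩
          apply SimpleGraph.Adj.reachable
          show (cycleGraph n).Adj ((sg (2*n)).symm z) z
          rw [adj_iff n hn _ _ (hB hpz) (hB hz)]
          left; simp)
      apply hp
      apply le_antisymm hB
      rw [← hD]
      exact Finset.filter_subset _ _
    haveI : Nonempty (B : Set ℕ) := ⟨⟨x, hx⟩⟩
    refine SimpleGraph.Connected.mk ?_
    rintro ⟨y, hy⟩ ⟨z, hz⟩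
    exact (hall y hy hy).symm.trans (hall z hz hz)

lemma proper_block (s : Finset ℕ) (π : Finset (Finset ℕ)) (h : IsPartitionOn s π)
    (hc : 2 ≤ π.card) (B : Finset ℕ) (hB : B ∈ π) : B ≠ s := by
  rintro rfl
  obtain ⟨C, hC, hne⟩ := Finset.exists_mem_ne (show 1 < π.card by omega) B
  obtain ⟨x, hx⟩ := h.1 C hC
  have hxB := h.2.1 C hC hx
  exact hne ((h.2.2 x hxB).unique ⟨hC, hx⟩ ⟨hB, hxB⟩)

lemma conn_good (n : ℕ) (hn : 2 ≤ n) (π : Finset (Finset ℕ)) (hc : 2 ≤ π.card) :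
    IsConnectedPartition (Finset.Icc 1 (2*n)) (cycleGraph n) π ↔ Good (2*n) π := by
  unfold IsConnectedPartition Good
  refine and_congr_right fun h => forall₂_congr fun B hB => ?_
  exact conn_iff n hn B (h.2.1 B hB) (h.1 B hB) (proper_block _ _ h hc B hB)

lemma good_LP (N : ℕ) (hN : 1 ≤ N) (π : Finset (Finset ℕ)) (hc : 2 ≤ π.card) :
    (Good N π ∧ IsStart N π 1) ↔ LP N π := by
  have s1 : (sg N).symm 1 = N := by rw [sg_symm, if_neg (by omega), if_pos rfl]
  constructor
  · rintro ⟨⟨h, h4⟩, C, hC, hC1, hC2⟩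
    rw [s1] at hC2
    refine ⟨h, ?_⟩
    have hst : ∀ B ∈ π, ∀ x ∈ B, (1 < x → x - 1 ∉ B) → (sg N).symm x ∉ B := by
      intro B hB x hx hxp
      have hx' := h.2.1 B hB hx
      rw [Finset.mem_Icc] at hx'
      rw [sg_symm, if_neg (by omega)]
      split_ifs with h1
      · subst h1
        rwa [(h.2.2 1 (by simp; omega)).unique ⟨hB, hx⟩ ⟨hC, hC1⟩]
      · exact hxp (by omega)
    intro B hB x hx y hy z hxz hzy
    by_contra hz
    have hne : (B.filter (fun w => z < w)).Nonempty := by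
      refine ⟨y, Finset.mem_filter.2 ⟨hy, ?_⟩⟩
      rcases Nat.eq_or_lt_of_le hzy with rfl | h'
      · exact absurd hy hz
      · exact h'
    have a1 := Finset.min'_mem _ hne
    have a2 : ∀ w ∈ B.filter (fun w => z < w), (B.filter (fun w => z < w)).min' hne ≤ w :=
      fun w hw => Finset.min'_le _ _ hw
    set u := (B.filter (fun w => z < w)).min' hne
    obtain ⟨a1, a3⟩ := Finset.mem_filter.1 a1
    have b1 := Finset.min'_mem B ⟨x, hx⟩
    have b2 : ∀ w ∈ B, B.min' ⟨x, hx⟩ ≤ w := fun w hw => Finset.min'_le _ _ hw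
    set v := B.min' ⟨x, hx⟩
    have := (h4 B hB).unique ⟨a1, hst B hB u a1 (by
      intro _ hm
      by_cases hzu : z = u - 1
      · exact hz (hzu ▸ hm)
      · have := a2 (u-1) (Finset.mem_filter.2 ⟨hm, by omega⟩)
        omega)⟩ ⟨b1, hst B hB v b1 (by
      intro _ hm
      have := b2 _ hm
      omega)⟩
    have := b2 x hx
    omega
  · rintro ⟨h, h4⟩
    have hfull : ∀ B ∈ π, 1 ∈ B → N ∉ B := by
      intro B hB h1 h2
      apply proper_block _ _ h hc B hB
      apply le_antisymm (h.2.1 B hB)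
      intro x hx
      rw [Finset.mem_Icc] at hx
      exact h4 B hB 1 h1 N h2 x hx.1 hx.2
    refine ⟨⟨h, ?_⟩, ?_⟩
    · intro B hB
      have b1 := Finset.min'_mem B (h.1 B hB)
      have b2 : ∀ w ∈ B, B.min' (h.1 B hB) ≤ w := fun w hw => Finset.min'_le _ _ hw
      set v := B.min' (h.1 B hB)
      refine ⟨v, ⟨b1, ?_⟩, ?_⟩
      · have hv := h.2.1 B hB b1
        rw [Finset.mem_Icc] at hv
        rw [sg_symm, if_neg (by omega)]
        split_ifs with hv1
        · rw [hv1] at b1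
          exact hfull B hB b1
        · intro hm
          have := b2 _ hm
          omega
      · rintro y ⟨hy, hy'⟩
        have hyy := h.2.1 B hB hy
        have hvv := h.2.1 B hB b1
        rw [Finset.mem_Icc] at hyy hvv
        have := b2 y hy
        by_contra hne
        rw [sg_symm, if_neg (by omega), if_neg (by omega)] at hy'
        exact hy' (h4 B hB v b1 y hy (y-1) (by omega) (by omega))
    · obtain ⟨B, ⟨hB, h1⟩, -⟩ := h.2.2 1 (by simp; omega)
      exact ⟨B, hB, h1, by rw [s1]; exact hfull B hB h1⟩

lemma GSs_card (N i k : ℕ) (hN : 1 ≤ N) (hi : 2 ≤ i) :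
    (GSs N i k 1).ncard = (TL N i k).ncard := by
  have : GSs N i k 1 = PL '' TL N i k := by
    ext π
    constructor
    · rintro ⟨⟨h1, h2, h3⟩, h4⟩
      obtain ⟨l, hl1, hl2, rfl⟩ := PL_surj N π ((good_LP N hN π (by omega)).1 ⟨h1, h4⟩)
      exact ⟨l, ⟨hl1, hl2, by rw [← h2, PL_card l hl1], by rw [← h3, PL_odd l hl1]⟩, rfl⟩
    · rintro ⟨l, ⟨h1, h2, h3, h4⟩, rfl⟩
      have hc := PL_card l h1
      have := (good_LP N hN (PL l) (by omega)).2 (h2 ▸ PL_LP l h1)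
      exact ⟨⟨this.1, by omega, by rw [PL_odd l h1, h4]⟩, this.2⟩
  rw [this, Set.InjOn.ncard_image]
  intro l hl l' hl' he
  exact PL_inj l l' hl.1 hl'.1 (hl.2.1.trans hl'.2.1.symm) he

/-- Lemma 3.5: if `N` is the number of connected partitions of the cycle graph
`O_{2n}` into `i` blocks, exactly `2m` of which have odd cardinality, then
`i · N = 2n · C(i, 2m) · C(n+m−1, i−1)`. -/
theorem cycle_odd_block_partitions (n i m : ℕ) (hn : 2 ≤ n)
    (hi2 : 2 ≤ i) (hi : i ≤ 2 * n) (hm1 : 1 ≤ m) (hm : m ≤ i / 2) :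
    i * {π : Finset (Finset ℕ) |
        IsConnectedPartition (Finset.Icc 1 (2 * n)) (cycleGraph n) π ∧ π.card = i ∧
        (π.filter (fun B => Odd B.card)).card = 2 * m}.ncard
      = 2 * n * (i.choose (2 * m) * (n + m - 1).choose (i - 1)) := by
  have hset : {π : Finset (Finset ℕ) |
        IsConnectedPartition (Finset.Icc 1 (2 * n)) (cycleGraph n) π ∧ π.card = i ∧
        (π.filter (fun B => Odd B.card)).card = 2 * m} = GS (2*n) i (2*m) := by
    ext π
    constructor
    · rintro ⟨h1, h2, h3⟩
      exact ⟨(conn_good n hn π (by omega)).1 h1, h2, h3⟩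
    · rintro ⟨h1, h2, h3⟩
      exact ⟨(conn_good n hn π (by omega)).2 h1, h2, h3⟩
  rw [hset, double_count, GSs_card _ _ _ (by omega) hi2]
  congr 1
  obtain ⟨i, rfl⟩ : ∃ j, i = j + 1 := ⟨i - 1, by omega⟩
  rw [Set.ncard, TL_card (2*n) i (2*m) (n+m) (by omega) (by ring)]
  simp
end
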